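/- arXiv:0903.3446 — 2 statements merged into one kernel-verified Lean document; each statement's English description precedes it below -/
import Mathlib

section
/- Fix λ' > 0 and for ξ' ∈ ℝ^N let u(y; ξ') = (λ'/(λ'² + |y−ξ'|²))^{(N−4)/2}. Consider the pointwise expression E(y, ξ') = Σ_{i,j,s,t=1}^N H̄_{ij}(y) H̄_{st}(y) (∂_i∂_j u)(y; ξ') (∂_s∂_t u)(y; ξ') (derivatives in y). Then ∫_{ℝ^N} E(y, 0) dy = 0, and for all p, q ∈ {1,…,N}, ∫_{ℝ^N} [∂²E/∂ξ'_p∂ξ'_q](y, ξ')|_{ξ'=0} dy = 0. -/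
open scoped BigOperators
open MeasureTheory

noncomputable section

/-- The partial derivative `∂f/∂y_i` of a function on Euclidean space. -/
def pd (N : ℕ) (i : Fin N) (f : EuclideanSpace ℝ (Fin N) → ℝ) :
    EuclideanSpace ℝ (Fin N) → ℝ :=
  fun y => fderiv ℝ f y (EuclideanSpace.single i 1)

/-- `H_{ij}(y) = Σ_{p,q} W_{ipjq} y_p y_q`. -/
def Hmat (N : ℕ) (W : Fin N → Fin N → Fin N → Fin N → ℝ) (i j : Fin N)
    (y : EuclideanSpace ℝ (Fin N)) : ℝ :=
  ∑ p : Fin N, ∑ q : Fin N, W i p j q * y p * y q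

/-- `H̄_{ij}(y) = f(|y|²) H_{ij}(y)`. -/
def Hbar (N : ℕ) (W : Fin N → Fin N → Fin N → Fin N → ℝ) (f : ℝ → ℝ) (i j : Fin N)
    (y : EuclideanSpace ℝ (Fin N)) : ℝ :=
  f (‖y‖ ^ 2) * Hmat N W i j y

/-- The surface measure on the unit sphere `S^{N-1} ⊂ ℝ^N`. -/
def sphereMeasure (N : ℕ) :
    Measure (Metric.sphere (0 : EuclideanSpace ℝ (Fin N)) 1) :=
  (volume : Measure (EuclideanSpace ℝ (Fin N))).toSphere

/-- `|S^{N-1}|`, the total surface measure of the unit sphere in `ℝ^N`. -/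
def sphereArea (N : ℕ) : ℝ := (sphereMeasure N Set.univ).toReal

/-- The second mixed derivative `∂²F/∂ξ_p∂ξ_q` at `ξ = 0` of a function of `ξ ∈ ℝ^N`. -/
def d2Param (N : ℕ) (p q : Fin N) (F : EuclideanSpace ℝ (Fin N) → ℝ) : ℝ :=
  deriv (fun a : ℝ =>
    deriv (fun b : ℝ =>
      F (a • EuclideanSpace.single p (1 : ℝ) + b • EuclideanSpace.single q (1 : ℝ))) 0) 0


/-!
For a radial function `u y = φ (‖y - ξ‖²)` the Hessian is
`∂ᵢ∂ⱼu = 4 φ'' zᵢ zⱼ + 2 φ' δᵢⱼ` with `z = y - ξ`. The matrix `H̄(y)` is trace-free and annihilates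
`y` on both sides, so `∑ H̄ᵢⱼ ∂ᵢ∂ⱼu = 4 φ''(‖y - ξ‖²) ξᵀ H̄(y) ξ`. This is `O(|ξ|²)`, its square
`E(y, ξ)` is `O(|ξ|⁴)`, and both integrands vanish at every point `y`.
-/

open scoped Matrix Topology

section SecondDerivative

variable {V : Type*} [NormedAddCommGroup V] [NormedSpace ℝ V]

lemma hasFDerivAt_fderiv_sq_of_fderiv_eq_zero {S : V → ℝ} {x : V} (hS : ContDiffAt ℝ 1 S x)
    (hSx : S x = 0) (hS_fderiv : fderiv ℝ S x = 0) :
    HasFDerivAt (fderiv ℝ fun v => S v ^ 2) (0 : V →L[ℝ] V →L[ℝ] ℝ) x := by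
  have fderiv_sq : (fderiv ℝ fun v => S v ^ 2) =ᶠ[𝓝 x] fun v => S v • (2 • fderiv ℝ S v) := by
    filter_upwards [hS.eventually (by simp)] with v hv
    rw [fderiv_fun_pow 2 (hv.differentiableAt one_ne_zero)]
    ext w
    simp only [Nat.add_one_sub_one, pow_one, nsmul_eq_mul, Nat.cast_ofNat,
      smul_apply, smul_eq_mul]
    ring
  have S_isLittleO : S =o[𝓝 x] fun v => v - x := by
    simpa [hSx, hS_fderiv] using (hS.differentiableAt one_ne_zero).hasFDerivAt.isLittleO
  have fderiv_isBigO : (fun v => 2 • fderiv ℝ S v) =O[𝓝 x] fun _ => (1 : ℝ) :=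
    ((hS.continuousAt_fderiv one_ne_zero).const_smul 2).isBigO_one ℝ
  refine HasFDerivAt.congr_of_eventuallyEq ?_ fderiv_sq
  refine .of_isLittleO ?_
  simpa [hSx] using S_isLittleO.norm_right.smul_isBigO fderiv_isBigO

lemma deriv_deriv_add_smul_eq_of_hasFDerivAt_fderiv {F : V → ℝ} {L : V →L[ℝ] V →L[ℝ] ℝ}
    (hF : ∀ᶠ x in 𝓝 0, DifferentiableAt ℝ F x) (hL : HasFDerivAt (fderiv ℝ F) L 0) (v w : V) :
    deriv (fun a : ℝ => deriv (fun b : ℝ => F (a • v + b • w)) 0) 0 = L v w := by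
  have line_deriv : HasDerivAt (fun a : ℝ => a • v) v 0 := by
    simpa using (hasDerivAt_id (0 : ℝ)).smul_const v
  have line_tendsto : Filter.Tendsto (fun a : ℝ => a • v) (𝓝 0) (𝓝 0) := by
    simpa using line_deriv.continuousAt.tendsto
  have inner_deriv : (fun a : ℝ => deriv (fun b : ℝ => F (a • v + b • w)) 0)
      =ᶠ[𝓝 0] fun a => fderiv ℝ F (a • v) w := by
    filter_upwards [line_tendsto.eventually hF] with a ha
    exact ha.lineDeriv_eq_fderiv
  have fderiv_deriv : HasDerivAt (fun a : ℝ => fderiv ℝ F (a • v)) (L v) 0 :=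
    HasFDerivAt.comp_hasDerivAt 0 (by simpa using hL) line_deriv
  rw [inner_deriv.deriv_eq]
  simpa using (fderiv_deriv.clm_apply (hasDerivAt_const 0 w)).deriv

end SecondDerivative

section RadialFunction

lemma contDiffAt_div_sq_add_rpow {lam : ℝ} (hlam : 0 < lam) (m : ℝ) {k : WithTop ℕ∞} {s : ℝ}
    (hs : 0 ≤ s) : ContDiffAt ℝ k (fun s => (lam / (lam ^ 2 + s)) ^ m) s := by
  have h : 0 < lam ^ 2 + s := by positivity
  exact (contDiffAt_const.div (by fun_prop) h.ne').rpow_const_of_ne (div_pos hlam h).ne'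

variable {V : Type*} [NormedAddCommGroup V] [InnerProductSpace ℝ V]

lemma hasFDerivAt_comp_norm_sub_sq {φ : ℝ → ℝ} {ξ y : V}
    (hφ : DifferentiableAt ℝ φ (‖y - ξ‖ ^ 2)) :
    HasFDerivAt (fun z => φ (‖z - ξ‖ ^ 2))
      (deriv φ (‖y - ξ‖ ^ 2) • (2 : ℝ) • innerSL ℝ (y - ξ)) y := by
  have h : HasFDerivAt (fun z => ‖z - ξ‖ ^ 2) ((2 : ℝ) • innerSL ℝ (y - ξ)) y := by
    simpa [ofNat_smul_eq_nsmul] using ((hasFDerivAt_id (𝕜 := ℝ) y).sub_const ξ).norm_sq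
  exact hφ.hasDerivAt.comp_hasFDerivAt y h

lemma contDiff_comp_norm_sub_sq {k : WithTop ℕ∞} {ψ : ℝ → ℝ} {y : V}
    (hψ : ∀ s, 0 ≤ s → ContDiffAt ℝ k ψ s) : ContDiff ℝ k fun ξ => ψ (‖y - ξ‖ ^ 2) :=
  contDiff_iff_contDiffAt.mpr fun ξ => (hψ _ (sq_nonneg _)).comp ξ
    ((contDiff_const.sub contDiff_id).norm_sq ℝ).contDiffAt

end RadialFunction

section QuadraticForm

variable {n R : Type*} [Fintype n] [CommRing R]

lemma dotProduct_mulVec_self_eq_zero_of_antisymm [IsAddTorsionFree R] {B : Matrix n n R}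
    (hB : Bᵀ = -B) (x : n → R) : x ⬝ᵥ B *ᵥ x = 0 := by
  refine self_eq_neg.mp ?_
  calc x ⬝ᵥ B *ᵥ x = x ⬝ᵥ Bᵀ *ᵥ x := by
        rw [Matrix.mulVec_transpose, Matrix.dotProduct_mulVec, dotProduct_comm]
    _ = -(x ⬝ᵥ B *ᵥ x) := by rw [hB, Matrix.neg_mulVec, dotProduct_neg]

lemma sub_dotProduct_mulVec_sub {A : Matrix n n R} {y : n → R} (hr : A *ᵥ y = 0)
    (hl : y ᵥ* A = 0) (x : n → R) : (y - x) ⬝ᵥ A *ᵥ (y - x) = x ⬝ᵥ A *ᵥ x := by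
  rw [Matrix.mulVec_sub, hr, zero_sub, dotProduct_neg, Matrix.dotProduct_mulVec, Matrix.sub_vecMul,
    hl, zero_sub, neg_dotProduct, neg_neg, Matrix.dotProduct_mulVec]

end QuadraticForm

section EuclideanQuadraticForm

variable {n : Type*} [Fintype n]

lemma contDiff_dotProduct_mulVec_self {k : WithTop ℕ∞} (A : Matrix n n ℝ) :
    ContDiff ℝ k fun x : EuclideanSpace ℝ n => x ⬝ᵥ A *ᵥ x := by
  simp only [dotProduct, Matrix.mulVec]
  fun_prop

lemma hasFDerivAt_dotProduct_mulVec_self_zero (A : Matrix n n ℝ) :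
    HasFDerivAt (fun x : EuclideanSpace ℝ n => x ⬝ᵥ A *ᵥ x)
      (0 : EuclideanSpace ℝ n →L[ℝ] ℝ) 0 := by
  classical
  have inner_eq : (fun x : EuclideanSpace ℝ n => x ⬝ᵥ A *ᵥ x)
      = fun x => inner ℝ x (Matrix.toEuclideanCLM (𝕜 := ℝ) A x) := by
    ext x
    simp [EuclideanSpace.inner_eq_star_dotProduct, dotProduct_comm]
  rw [inner_eq]
  refine ((hasFDerivAt_id (𝕜 := ℝ) (0 : EuclideanSpace ℝ n)).inner ℝ
    (Matrix.toEuclideanCLM (n := n) (𝕜 := ℝ) A).hasFDerivAt).congr_fderiv ?_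
  ext v
  simp

lemma hasFDerivAt_mul_dotProduct_mulVec_self_zero {g : EuclideanSpace ℝ n → ℝ}
    (hg : DifferentiableAt ℝ g 0) (A : Matrix n n ℝ) :
    HasFDerivAt (fun x : EuclideanSpace ℝ n => g x * (x ⬝ᵥ A *ᵥ x))
      (0 : EuclideanSpace ℝ n →L[ℝ] ℝ) 0 := by
  refine (hg.hasFDerivAt.fun_mul (hasFDerivAt_dotProduct_mulVec_self_zero A)).congr_fderiv ?_
  ext v
  simp

end EuclideanQuadraticForm

section RadialBubble

variable {N : ℕ}

lemma d2Param_sq_eq_zero {S : EuclideanSpace ℝ (Fin N) → ℝ} (hS : ContDiffAt ℝ 1 S 0)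
    (hS0 : S 0 = 0) (hS_fderiv : fderiv ℝ S 0 = 0) (p q : Fin N) :
    d2Param N p q (fun ξ => S ξ ^ 2) = 0 := by
  have sq_differentiable : ∀ᶠ ξ in 𝓝 0, DifferentiableAt ℝ (fun ξ => S ξ ^ 2) ξ := by
    filter_upwards [hS.eventually (by simp)] with ξ hξ
    exact (hξ.differentiableAt one_ne_zero).pow 2
  exact deriv_deriv_add_smul_eq_of_hasFDerivAt_fderiv sq_differentiable
    (hasFDerivAt_fderiv_sq_of_fderiv_eq_zero hS hS0 hS_fderiv) _ _

section PartialDerivatives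

variable {φ : ℝ → ℝ} {ξ y : EuclideanSpace ℝ (Fin N)}

lemma pd_mul {g h : EuclideanSpace ℝ (Fin N) → ℝ} (hg : DifferentiableAt ℝ g y)
    (hh : DifferentiableAt ℝ h y) (i : Fin N) :
    pd N i (fun z => g z * h z) y = g y * pd N i h y + h y * pd N i g y := by
  simp [pd, fderiv_fun_mul hg hh]

lemma pd_coord_sub (c : ℝ) (i j : Fin N) :
    pd N i (fun z => z j - c) y = (1 : Matrix (Fin N) (Fin N) ℝ) i j := by
  have coord_hasFDerivAt : HasFDerivAt (fun z : EuclideanSpace ℝ (Fin N) => z j - c)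
      (EuclideanSpace.proj j : EuclideanSpace ℝ (Fin N) →L[ℝ] ℝ) y :=
    (EuclideanSpace.proj j : EuclideanSpace ℝ (Fin N) →L[ℝ] ℝ).hasFDerivAt.sub_const c
  rw [pd, coord_hasFDerivAt.fderiv]
  simp [Matrix.one_apply, eq_comm]

lemma pd_comp_norm_sub_sq (hφ : DifferentiableAt ℝ φ (‖y - ξ‖ ^ 2)) (j : Fin N) :
    pd N j (fun z => φ (‖z - ξ‖ ^ 2)) y = 2 * deriv φ (‖y - ξ‖ ^ 2) * (y j - ξ j) := by
  rw [pd, (hasFDerivAt_comp_norm_sub_sq hφ).fderiv]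
  simp only [map_sub, smul_apply, sub_apply, coe_innerSL_apply,
    EuclideanSpace.inner_single_right, Real.ringHom_apply, one_mul, smul_eq_mul]
  ring

lemma pd_pd_comp_norm_sub_sq (hφ : ∀ s, 0 ≤ s → ContDiffAt ℝ 2 φ s) (i j : Fin N) :
    pd N i (pd N j fun z => φ (‖z - ξ‖ ^ 2)) y
      = 4 * deriv (deriv φ) (‖y - ξ‖ ^ 2) * ((y i - ξ i) * (y j - ξ j))
        + 2 * deriv φ (‖y - ξ‖ ^ 2) * (1 : Matrix (Fin N) (Fin N) ℝ) i j := by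
  have gradient : (pd N j fun z => φ (‖z - ξ‖ ^ 2))
      = fun z => 2 * deriv φ (‖z - ξ‖ ^ 2) * (z j - ξ j) :=
    funext fun z =>
      pd_comp_norm_sub_sq ((hφ _ (sq_nonneg _)).differentiableAt two_ne_zero) j
  have coeff_differentiable : DifferentiableAt ℝ (fun s => 2 * deriv φ s) (‖y - ξ‖ ^ 2) :=
    (((hφ _ (sq_nonneg _)).derivWithin (m := 1) (by norm_num)).differentiableAt
      one_ne_zero).const_mul 2
  rw [gradient, pd_mul (hasFDerivAt_comp_norm_sub_sq coeff_differentiable).differentiableAt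
    (by fun_prop), pd_comp_norm_sub_sq coeff_differentiable, pd_coord_sub, deriv_const_mul_field]
  ring

end PartialDerivatives

/-- The contraction `∑ᵢⱼ Aᵢⱼ ∂ᵢ∂ⱼu` of a matrix with the Hessian of `u`; the integrand `E` is the
square of such a contraction. -/
def hessianContraction (A : Matrix (Fin N) (Fin N) ℝ) (u : EuclideanSpace ℝ (Fin N) → ℝ)
    (y : EuclideanSpace ℝ (Fin N)) : ℝ :=
  ∑ i, ∑ j, A i j * pd N i (pd N j u) y

lemma hessianContraction_sq (A : Matrix (Fin N) (Fin N) ℝ) (u : EuclideanSpace ℝ (Fin N) → ℝ)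
    (y : EuclideanSpace ℝ (Fin N)) :
    hessianContraction A u y ^ 2
      = ∑ i, ∑ j, ∑ s, ∑ t, A i j * A s t * pd N i (pd N j u) y * pd N s (pd N t u) y := by
  simp only [hessianContraction, sq, Finset.sum_mul, Finset.mul_sum]
  refine Finset.sum_congr rfl fun i _ => Finset.sum_congr rfl fun j _ =>
    Finset.sum_congr rfl fun s _ => Finset.sum_congr rfl fun t _ => ?_
  ring

lemma hessianContraction_comp_norm_sub_sq {φ : ℝ → ℝ} (hφ : ∀ s, 0 ≤ s → ContDiffAt ℝ 2 φ s)
    (A : Matrix (Fin N) (Fin N) ℝ) (ξ y : EuclideanSpace ℝ (Fin N)) :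
    hessianContraction A (fun z => φ (‖z - ξ‖ ^ 2)) y
      = 4 * deriv (deriv φ) (‖y - ξ‖ ^ 2) * ((y - ξ).ofLp ⬝ᵥ A *ᵥ (y - ξ).ofLp)
        + 2 * deriv φ (‖y - ξ‖ ^ 2) * A.trace := by
  simp only [hessianContraction, pd_pd_comp_norm_sub_sq hφ, mul_add, Finset.sum_add_distrib,
    dotProduct, Matrix.mulVec, Matrix.trace, Matrix.diag, Finset.mul_sum]
  congr 1
  · refine Finset.sum_congr rfl fun i _ => Finset.sum_congr rfl fun j _ => ?_
    simp only [PiLp.sub_apply]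
    ring
  · refine Finset.sum_congr rfl fun i _ => ?_
    simp only [Matrix.one_apply, mul_ite, mul_one, mul_zero, Finset.sum_ite_eq, Finset.mem_univ,
      if_true]
    ring

/-- The matrix `(H̄ᵢⱼ(y))ᵢⱼ`, whose contraction with the Hessian of the bubble squares to `E`. -/
def HbarMatrix (W : Fin N → Fin N → Fin N → Fin N → ℝ) (f : ℝ → ℝ)
    (y : EuclideanSpace ℝ (Fin N)) : Matrix (Fin N) (Fin N) ℝ :=
  Matrix.of fun i j => Hbar N W f i j y

section HbarMatrix

variable {W : Fin N → Fin N → Fin N → Fin N → ℝ} (f : ℝ → ℝ) (y : EuclideanSpace ℝ (Fin N))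

lemma trace_HbarMatrix (hTrace : ∀ p q, ∑ i, W i p i q = 0) : (HbarMatrix W f y).trace = 0 := by
  have trace_eq : ∑ i, Hmat N W i i y = ∑ p, ∑ q, (∑ i, W i p i q) * y p * y q := by
    simp only [Hmat, Finset.sum_mul]
    rw [Finset.sum_comm]
    exact Finset.sum_congr rfl fun p _ => Finset.sum_comm
  simp [HbarMatrix, Matrix.trace, Hbar, ← Finset.mul_sum, trace_eq, hTrace]

lemma HbarMatrix_mulVec_self (hW : ∀ i p j q, W i p j q = -W i p q j) :
    HbarMatrix W f y *ᵥ y = 0 := by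
  ext i
  have contraction (p : Fin N) : (y : Fin N → ℝ) ⬝ᵥ (W i p : Matrix _ _ ℝ) *ᵥ y = 0 :=
    dotProduct_mulVec_self_eq_zero_of_antisymm (Matrix.ext fun j q => hW i p q j) y
  calc (HbarMatrix W f y *ᵥ y) i
      = f (‖y‖ ^ 2) * ∑ p, y p * ((y : Fin N → ℝ) ⬝ᵥ (W i p : Matrix _ _ ℝ) *ᵥ y) := by
        simp only [HbarMatrix, Hbar, Hmat, Matrix.mulVec, Matrix.of_apply, dotProduct,
          Finset.mul_sum, Finset.sum_mul]
        rw [Finset.sum_comm]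
        refine Finset.sum_congr rfl fun p _ => Finset.sum_congr rfl fun j _ =>
          Finset.sum_congr rfl fun q _ => ?_
        ring
    _ = 0 := by simp [contraction]

lemma self_vecMul_HbarMatrix (hW : ∀ i p j q, W i p j q = -W p i j q) :
    (y : Fin N → ℝ) ᵥ* HbarMatrix W f y = 0 := by
  ext j
  have contraction (q : Fin N) :
      (y : Fin N → ℝ) ⬝ᵥ (Matrix.of fun i p => W i p j q) *ᵥ y = 0 :=
    dotProduct_mulVec_self_eq_zero_of_antisymm (Matrix.ext fun i p => hW p i j q) y
  calc ((y : Fin N → ℝ) ᵥ* HbarMatrix W f y) j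
      = f (‖y‖ ^ 2) * ∑ q, y q * ((y : Fin N → ℝ) ⬝ᵥ (Matrix.of fun i p => W i p j q) *ᵥ y) := by
        simp only [HbarMatrix, Hbar, Hmat, Matrix.vecMul, Matrix.mulVec, Matrix.of_apply,
          dotProduct, Finset.mul_sum]
        rw [Finset.sum_comm_cycle]
        refine Finset.sum_congr rfl fun q _ => Finset.sum_congr rfl fun i _ =>
          Finset.sum_congr rfl fun p _ => ?_
        ring
    _ = 0 := by simp [contraction]

end HbarMatrix

lemma hessianContraction_HbarMatrix {W : Fin N → Fin N → Fin N → Fin N → ℝ}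
    (hW1 : ∀ i p j q, W i p j q = -W p i j q) (hW2 : ∀ i p j q, W i p j q = -W i p q j)
    (hTrace : ∀ p q, ∑ i, W i p i q = 0) (f : ℝ → ℝ) {φ : ℝ → ℝ}
    (hφ : ∀ s, 0 ≤ s → ContDiffAt ℝ 2 φ s) (ξ y : EuclideanSpace ℝ (Fin N)) :
    hessianContraction (HbarMatrix W f y) (fun z => φ (‖z - ξ‖ ^ 2)) y
      = 4 * deriv (deriv φ) (‖y - ξ‖ ^ 2) * (ξ ⬝ᵥ HbarMatrix W f y *ᵥ ξ) := by
  rw [hessianContraction_comp_norm_sub_sq hφ, trace_HbarMatrix f y hTrace, WithLp.ofLp_sub,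
    sub_dotProduct_mulVec_sub (HbarMatrix_mulVec_self f y hW2) (self_vecMul_HbarMatrix f y hW1)]
  ring

theorem stmt_15_general (W : Fin N → Fin N → Fin N → Fin N → ℝ)
    (hW1 : ∀ i p j q, W i p j q = -W p i j q)
    (hW2 : ∀ i p j q, W i p j q = -W i p q j)
    (hTrace : ∀ p q, ∑ i : Fin N, W i p i q = 0)
    (f φ : ℝ → ℝ) (hφ : ∀ s, 0 ≤ s → ContDiffAt ℝ 3 φ s)
    (U : EuclideanSpace ℝ (Fin N) → EuclideanSpace ℝ (Fin N) → ℝ)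
    (hU : ∀ ξ' y, U ξ' y = φ (‖y - ξ'‖ ^ 2))
    (E : EuclideanSpace ℝ (Fin N) → EuclideanSpace ℝ (Fin N) → ℝ)
    (hE : ∀ y ξ', E y ξ'
        = ∑ i : Fin N, ∑ j : Fin N, ∑ s : Fin N, ∑ t : Fin N,
            Hbar N W f i j y * Hbar N W f s t y
              * pd N i (pd N j (U ξ')) y * pd N s (pd N t (U ξ')) y)
    (y : EuclideanSpace ℝ (Fin N)) :
    E y 0 = 0 ∧ ∀ p q : Fin N, d2Param N p q (E y) = 0 := by
  have contraction_eq (ξ : EuclideanSpace ℝ (Fin N)) :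
      hessianContraction (HbarMatrix W f y) (U ξ) y
        = 4 * deriv (deriv φ) (‖y - ξ‖ ^ 2) * (ξ ⬝ᵥ HbarMatrix W f y *ᵥ ξ) := by
    rw [funext (hU ξ), hessianContraction_HbarMatrix hW1 hW2 hTrace f
      fun s hs => (hφ s hs).of_le (by norm_num)]
  have E_eq_sq : E y = fun ξ =>
      (4 * deriv (deriv φ) (‖y - ξ‖ ^ 2) * (ξ ⬝ᵥ HbarMatrix W f y *ᵥ ξ)) ^ 2 := by
    ext ξ
    rw [hE, ← contraction_eq, hessianContraction_sq]
    rfl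
  have coeff_contDiff : ContDiff ℝ 1 fun ξ => 4 * deriv (deriv φ) (‖y - ξ‖ ^ 2) :=
    contDiff_const.mul <| contDiff_comp_norm_sub_sq (y := y) fun s hs =>
      ((hφ s hs).derivWithin (m := 2) (by norm_num)).derivWithin (by norm_num)
  refine ⟨by simp [E_eq_sq], fun p q => ?_⟩
  rw [E_eq_sq]
  exact d2Param_sq_eq_zero
    (coeff_contDiff.mul (contDiff_dotProduct_mulVec_self _)).contDiffAt (by simp)
    (hasFDerivAt_mul_dotProduct_mulVec_self_zero
      (coeff_contDiff.differentiable one_ne_zero 0) _).fderiv p q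

end RadialBubble

theorem stmt_15 (N : ℕ) (hN : 25 ≤ N)
    (W : Fin N → Fin N → Fin N → Fin N → ℝ)
    (hW1 : ∀ i p j q, W i p j q = - W p i j q)
    (hW2 : ∀ i p j q, W i p j q = - W i p q j)
    (hW3 : ∀ i p j q, W i p j q = W j q i p)
    (hBianchi : ∀ i p j q, W i p j q + W i j q p + W i q p j = 0)
    (hTrace : ∀ p q, ∑ i : Fin N, W i p i q = 0)
    (f : ℝ → ℝ)
    (hf : ∃ P : Polynomial ℝ, P.degree ≤ 4 ∧ ∀ x, f x = P.eval x)
    (lam' : ℝ) (hlam' : 0 < lam')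
    (U : EuclideanSpace ℝ (Fin N) → EuclideanSpace ℝ (Fin N) → ℝ)
    (hU : ∀ ξ' y, U ξ' y = (lam' / (lam' ^ 2 + ‖y - ξ'‖ ^ 2)) ^ (((N : ℝ) - 4) / 2))
    (E : EuclideanSpace ℝ (Fin N) → EuclideanSpace ℝ (Fin N) → ℝ)
    (hE : ∀ y ξ', E y ξ'
        = ∑ i : Fin N, ∑ j : Fin N, ∑ s : Fin N, ∑ t : Fin N,
            Hbar N W f i j y * Hbar N W f s t y
              * pd N i (pd N j (U ξ')) y * pd N s (pd N t (U ξ')) y) :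
    ((∫ y : EuclideanSpace ℝ (Fin N), E y 0) = 0) ∧
    (∀ p q : Fin N, (∫ y : EuclideanSpace ℝ (Fin N), d2Param N p q (E y)) = 0) := by
  have h := stmt_15_general W hW1 hW2 hTrace f
    (fun s => (lam' / (lam' ^ 2 + s)) ^ (((N : ℝ) - 4) / 2))
    (fun _ => contDiffAt_div_sq_add_rpow hlam' _) U hU E hE
  simp [h]
end
end

section
/- Fix λ' > 0 and let u(y) = (λ'/(λ'² + |y|²))^{(N−4)/2} (the bubble centered at ξ' = 0). Then ∫_{ℝ^N} Σ_{i,j,m,s=1}^N (∂_i H̄_{ms})(y) (∂_j H̄_{ms})(y) (∂_i u)(y) (∂_j u)(y) dy = |S^{N−1}| · (Σ_{i,j,k,ℓ=1}^N (W_{ikjℓ}+W_{iℓjk})²) · λ'^{N−4} · [2(N−4)²/(N(N+2))] · ∫₀^∞ [ r² f'(r²) + f(r²) ]² r^{N+3}/(λ'²+r²)^{N−2} dr. -/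
open scoped BigOperators
open MeasureTheory

noncomputable section

/-!
The gradient of a radial function is a multiple of `y`, so contracting `∇H̄` with `∇u` only sees
the derivative of `H̄` along `y`, which Euler's identity for the quadratic form `H` turns into
`2 (|y|² f' + f) H`. The integrand is thus a radial function times the homogeneous quartic
`∑ H_{ms}²`, and polar coordinates reduce the claim to the mean of a squared quadratic form over
the sphere. By rotation invariance, polarization and diagonalization,
`∫ ⟨T x, x⟩² = |S| / (n (n + 2)) · ((tr T)² + 2 tr T²)` for symmetric `T`, and the trace vanishes
for `H_{ms}`.
-/

section Spectral

variable {E : Type*} [NormedAddCommGroup E] [InnerProductSpace ℝ E] [FiniteDimensional ℝ E]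
  {T : E →ₗ[ℝ] E}

lemma inner_map_self_eq_sum_eigenvalues (hT : T.IsSymmetric) (x : E) :
    inner ℝ (T x) x
      = ∑ i, hT.eigenvalues rfl i * inner ℝ (hT.eigenvectorBasis rfl i) x ^ 2 := by
  rw [← (hT.eigenvectorBasis rfl).sum_inner_mul_inner]
  refine Finset.sum_congr rfl fun i _ => ?_
  rw [hT, hT.apply_eigenvectorBasis, inner_smul_right, real_inner_comm, RCLike.ofReal_real_eq_id,
    id, sq, mul_assoc]

lemma trace_mul_self_eq_sum_eigenvalues_sq (hT : T.IsSymmetric) :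
    LinearMap.trace ℝ E (T * T) = ∑ i, hT.eigenvalues rfl i ^ 2 := by
  rw [LinearMap.trace_eq_sum_inner _ (hT.eigenvectorBasis rfl)]
  refine Finset.sum_congr rfl fun i _ => ?_
  rw [Module.End.mul_apply, ← hT, hT.apply_eigenvectorBasis, real_inner_self_eq_norm_sq,
    norm_smul, OrthonormalBasis.norm_eq_one, mul_one, RCLike.ofReal_real_eq_id, id,
    Real.norm_eq_abs, sq_abs]

end Spectral

section Polar

variable {E : Type*} [NormedAddCommGroup E] [NormedSpace ℝ E] [FiniteDimensional ℝ E]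
  [MeasurableSpace E] [BorelSpace E]

lemma integral_pow_mul_volumeIoiPow (n k : ℕ) (g : ℝ → ℝ) :
    ∫ r : Set.Ioi (0 : ℝ), r.1 ^ k * g r ∂Measure.volumeIoiPow n
      = ∫ r in Set.Ioi (0 : ℝ), r ^ (n + k) * g r := by
  rw [Measure.volumeIoiPow, integral_withDensity_eq_integral_toReal_smul (by fun_prop) (by simp),
    ← integral_subtype_comap measurableSet_Ioi]
  refine integral_congr_ae (.of_forall fun r => ?_)
  have hr : 0 ≤ r.1 := r.2.le
  simp only [ENNReal.toReal_ofReal (pow_nonneg hr n), smul_eq_mul, pow_add, mul_assoc]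

lemma integral_homogeneous_mul_fun_norm [Nontrivial E] (μ : Measure E) [μ.IsAddHaarMeasure]
    {k : ℕ} {h : E → ℝ} (hh : ∀ t > 0, ∀ y, h (t • y) = t ^ k * h y) (g : ℝ → ℝ) :
    ∫ y, h y * g ‖y‖ ∂μ
      = (∫ x, h x.1 ∂μ.toSphere)
        * ∫ r in Set.Ioi (0 : ℝ), r ^ (Module.finrank ℝ E - 1 + k) * g r := by
  have polar (y : ({0}ᶜ : Set E)) : h y * g ‖y.1‖ =
      h (homeomorphUnitSphereProd E y).1 * ((homeomorphUnitSphereProd E y).2.1 ^ k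
        * g (homeomorphUnitSphereProd E y).2) := by
    have hy : 0 < ‖y.1‖ := norm_pos_iff.mpr y.2
    rw [homeomorphUnitSphereProd_apply_fst_coe, homeomorphUnitSphereProd_apply_snd_coe,
      hh _ (inv_pos.mpr hy), inv_pow]
    field_simp
  calc ∫ y, h y * g ‖y‖ ∂μ
      = ∫ y : ({0}ᶜ : Set E), h y * g ‖y.1‖ ∂μ.comap (↑) := by
        rw [integral_subtype_comap (measurableSet_singleton _).compl fun y => h y * g ‖y‖,
          restrict_compl_singleton]
    _ = ∫ z : Metric.sphere (0 : E) 1 × Set.Ioi (0 : ℝ), h z.1 * (z.2.1 ^ k * g z.2)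
          ∂μ.toSphere.prod (Measure.volumeIoiPow (Module.finrank ℝ E - 1)) := by
        simp only [polar]
        exact μ.measurePreserving_homeomorphUnitSphereProd.integral_comp
          (Homeomorph.measurableEmbedding _)
          fun z : Metric.sphere (0 : E) 1 × Set.Ioi (0 : ℝ) => h z.1 * (z.2.1 ^ k * g z.2)
    _ = _ := by
        rw [integral_prod_mul (fun x : Metric.sphere (0 : E) 1 => h x)
          (fun r : Set.Ioi (0 : ℝ) => r.1 ^ k * g r), integral_pow_mul_volumeIoiPow]

lemma integrable_sphere_of_continuous (μ : Measure E) [μ.IsAddHaarMeasure]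
    {F : Metric.sphere (0 : E) 1 → ℝ} (hF : Continuous F) : Integrable F μ.toSphere :=
  hF.integrable_of_hasCompactSupport (.of_compactSpace F)

end Polar

section SphereMoments

variable {E : Type*} [NormedAddCommGroup E] [InnerProductSpace ℝ E] [FiniteDimensional ℝ E]
  [MeasurableSpace E] [BorelSpace E]

open scoped Pointwise in
lemma measurePreserving_map_toSphere (L : E ≃ₗᵢ[ℝ] E) :
    MeasurePreserving L ((volume : Measure E).toSphere.map (↑))
      ((volume : Measure E).toSphere.map (↑)) := by
  refine ⟨L.continuous.measurable, Measure.ext fun s hs => ?_⟩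
  have hLs : MeasurableSet (L ⁻¹' s) := L.continuous.measurable hs
  -- `toSphere s` is a multiple of the volume of the cone over `s`, and `L` commutes with cones.
  have cone_preimage : Set.Ioo (0 : ℝ) 1 • (Metric.sphere (0 : E) 1 ∩ L ⁻¹' s)
      = L ⁻¹' (Set.Ioo (0 : ℝ) 1 • (Metric.sphere (0 : E) 1 ∩ s)) := by
    ext y
    simp only [Set.mem_smul, Set.mem_preimage, Set.mem_inter_iff, mem_sphere_zero_iff_norm]
    constructor
    · rintro ⟨r, hr, x, ⟨hx, hxs⟩, rfl⟩
      exact ⟨r, hr, L x, ⟨by rw [L.norm_map, hx], hxs⟩, (map_smul L r x).symm⟩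
    · rintro ⟨r, hr, x, ⟨hx, hxs⟩, hy⟩
      exact ⟨r, hr, L.symm x, ⟨by rw [L.symm.norm_map, hx], by rwa [L.apply_symm_apply]⟩,
        by rw [← map_smul, hy, L.symm_apply_apply]⟩
  rw [Measure.map_apply L.continuous.measurable hs, Measure.map_apply measurable_subtype_coe hLs,
    Measure.map_apply measurable_subtype_coe hs,
    Measure.toSphere_apply' _ (measurable_subtype_coe hLs),
    Measure.toSphere_apply' _ (measurable_subtype_coe hs), Subtype.image_preimage_coe,
    Subtype.image_preimage_coe, cone_preimage,
    L.measurePreserving.measure_preimage_emb L.toHomeomorph.measurableEmbedding]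

lemma integral_sphere_comp_linearIsometryEquiv (L : E ≃ₗᵢ[ℝ] E) (F : E → ℝ) :
    ∫ x, F (L x.1) ∂(volume : Measure E).toSphere
      = ∫ x, F x.1 ∂(volume : Measure E).toSphere := by
  have hval : MeasurableEmbedding ((↑) : Metric.sphere (0 : E) 1 → E) :=
    .subtype_coe Metric.isClosed_sphere.measurableSet
  rw [← hval.integral_map F, ← hval.integral_map fun y => F (L y)]
  exact (measurePreserving_map_toSphere L).integral_comp L.toHomeomorph.measurableEmbedding F

lemma integral_sphere_comp_inner_congr_norm {v w : E} (h : ‖v‖ = ‖w‖) (g : ℝ → ℝ) :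
    ∫ x, g (inner ℝ v x.1) ∂(volume : Measure E).toSphere
      = ∫ x, g (inner ℝ w x.1) ∂(volume : Measure E).toSphere := by
  set L := Submodule.reflection (Submodule.span ℝ {v - w})ᗮ
  have hL : L v = w := Submodule.reflection_sub h
  rw [← integral_sphere_comp_linearIsometryEquiv L fun y => g (inner ℝ w y), ← hL]
  simp only [L.inner_map_map]

lemma exists_integral_sphere_inner_pow [Nontrivial E] (k : ℕ) :
    ∃ c : ℝ, ∀ v : E, ∫ x, inner ℝ v x.1 ^ k
      ∂(volume : Measure E).toSphere = c * ‖v‖ ^ k := by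
  obtain ⟨e, he⟩ := exists_norm_eq E zero_le_one
  refine ⟨∫ x, inner ℝ e x.1 ^ k ∂(volume : Measure E).toSphere,
    fun v => ?_⟩
  have hnorm : ‖v‖ = ‖‖v‖ • e‖ := by rw [norm_smul, norm_norm, he, mul_one]
  rw [integral_sphere_comp_inner_congr_norm hnorm (· ^ k), ← integral_mul_const]
  simp only [real_inner_smul_left, mul_pow, mul_comm]

lemma exists_integral_sphere_inner_sq_mul_inner_sq [Nontrivial E] :
    ∃ c : ℝ, ∀ v w : E, ∫ x, inner ℝ v x.1 ^ 2 * inner ℝ w x.1 ^ 2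
      ∂(volume : Measure E).toSphere = c * (‖v‖ ^ 2 * ‖w‖ ^ 2 + 2 * inner ℝ v w ^ 2) := by
  obtain ⟨c, hc⟩ := exists_integral_sphere_inner_pow (E := E) 4
  refine ⟨c / 3, fun v w => ?_⟩
  have polarization (x : E) : inner ℝ v x ^ 2 * inner ℝ w x ^ 2 =
      (inner ℝ (v + w) x ^ 4 + inner ℝ (v - w) x ^ 4
        - 2 * (inner ℝ v x ^ 4 + inner ℝ w x ^ 4)) / 12 := by
    rw [inner_add_left, inner_sub_left]
    ring
  have norm_pow_four (z : E) : ‖z‖ ^ 4 = (‖z‖ ^ 2) ^ 2 := by ring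
  simp only [polarization]
  rw [integral_div, integral_sub, integral_const_mul, integral_add, integral_add]
  · simp only [hc, norm_pow_four, norm_add_sq_real, norm_sub_sq_real]
    ring
  all_goals exact integrable_sphere_of_continuous _ (by fun_prop)

lemma exists_integral_sphere_inner_map_self_sq [Nontrivial E] :
    ∃ c : ℝ, ∀ T : E →ₗ[ℝ] E, T.IsSymmetric →
      ∫ x, inner ℝ (T x) x.1 ^ 2 ∂(volume : Measure E).toSphere
        = c * (LinearMap.trace ℝ E T ^ 2 + 2 * LinearMap.trace ℝ E (T * T)) := by
  obtain ⟨c, hc⟩ := exists_integral_sphere_inner_sq_mul_inner_sq (E := E)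
  refine ⟨c, fun T hT => ?_⟩
  set b := hT.eigenvectorBasis rfl
  set ev := hT.eigenvalues rfl
  have inner_map_self (x : E) : inner ℝ (T x) x = ∑ i, ev i * inner ℝ (b i) x ^ 2 :=
    inner_map_self_eq_sum_eigenvalues hT x
  have trace_eq : LinearMap.trace ℝ E T = ∑ i, ev i := hT.trace_eq_sum_eigenvalues rfl
  have hint (i j) : Integrable (fun x : Metric.sphere (0 : E) 1 =>
      ev i * ev j * (inner ℝ (b i) x.1 ^ 2 * inner ℝ (b j) x.1 ^ 2))
      (volume : Measure E).toSphere := integrable_sphere_of_continuous _ (by fun_prop)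
  calc ∫ x, inner ℝ (T x) x.1 ^ 2 ∂(volume : Measure E).toSphere
      = ∫ x, ∑ i, ∑ j,
          ev i * ev j * (inner ℝ (b i) x.1 ^ 2 * inner ℝ (b j) x.1 ^ 2)
          ∂(volume : Measure E).toSphere := by
        simp only [inner_map_self, sq (Finset.sum _ _), Finset.sum_mul_sum, mul_mul_mul_comm]
    _ = ∑ i, ∑ j, ev i * ev j * (c * (1 + 2 * inner ℝ (b i) (b j) ^ 2)) := by
        rw [integral_finsetSum _ fun i _ => integrable_finsetSum _ fun j _ => hint i j]
        simp only [integral_finsetSum _ fun j _ => hint _ j, integral_const_mul, hc,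
          b.norm_eq_one, one_pow, mul_one]
    _ = c * (LinearMap.trace ℝ E T ^ 2 + 2 * LinearMap.trace ℝ E (T * T)) := by
        rw [trace_eq, trace_mul_self_eq_sum_eigenvalues_sq hT, sq (∑ i, _), Finset.sum_mul_sum,
          Finset.mul_sum, ← Finset.sum_add_distrib, Finset.mul_sum]
        refine Finset.sum_congr rfl fun i _ => ?_
        simp only [b.inner_eq_ite, ite_pow, one_pow, zero_pow two_ne_zero, mul_ite, mul_one,
          mul_zero, mul_add, Finset.sum_add_distrib, Finset.sum_ite_eq, Finset.mem_univ, if_true,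
          Finset.mul_sum]
        congr 1
        · exact Finset.sum_congr rfl fun j _ => by ring
        · ring

lemma integral_sphere_inner_map_self_sq [Nontrivial E] {T : E →ₗ[ℝ] E} (hT : T.IsSymmetric) :
    ∫ x, inner ℝ (T x) x.1 ^ 2 ∂(volume : Measure E).toSphere
      = (volume : Measure E).toSphere.real Set.univ
          / (Module.finrank ℝ E * (Module.finrank ℝ E + 2))
        * (LinearMap.trace ℝ E T ^ 2 + 2 * LinearMap.trace ℝ E (T * T)) := by
  obtain ⟨c, hc⟩ := exists_integral_sphere_inner_map_self_sq (E := E)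
  have hdim : (0 : ℝ) < Module.finrank ℝ E := Nat.cast_pos.mpr Module.finrank_pos
  -- `T = 1` determines the constant.
  have area_eq : (volume : Measure E).toSphere.real Set.univ
      = c * ((Module.finrank ℝ E : ℝ) * (Module.finrank ℝ E + 2)) := by
    have h := hc 1 LinearMap.IsSymmetric.id
    simp only [Module.End.one_apply, real_inner_self_eq_norm_sq, norm_eq_of_mem_sphere, one_pow,
      integral_const, smul_eq_mul, mul_one, LinearMap.trace_one] at h
    rw [h]
    ring
  rw [hc T hT, area_eq, mul_div_cancel_right₀ c (by positivity)]

lemma integral_sphere_quadraticForm_sq {ι : Type*} [Fintype ι] [Nonempty ι] (a : ι → ι → ℝ) :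
    ∫ x, (∑ p, ∑ q, a p q * x.1 p * x.1 q) ^ 2
        ∂(volume : Measure (EuclideanSpace ℝ ι)).toSphere
      = (volume : Measure (EuclideanSpace ℝ ι)).toSphere.real Set.univ
          / (Fintype.card ι * (Fintype.card ι + 2))
        * ((∑ p, a p p) ^ 2 + (∑ p, ∑ q, (a p q + a q p) ^ 2) / 2) := by
  classical
  set A : Matrix ι ι ℝ := .of fun p q => (a p q + a q p) / 2 with hA
  have hsymm : (Matrix.toLpLin 2 2 A).IsSymmetric := by
    rw [Matrix.isSymmetric_toEuclideanLin_iff]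
    ext p q
    simp [hA, add_comm]
  have inner_map_self (x : EuclideanSpace ℝ ι) :
      inner ℝ (Matrix.toLpLin 2 2 A x) x = ∑ p, ∑ q, a p q * x p * x q := by
    have double_sum_symm : ∑ p, ∑ q, a q p * x p * x q = ∑ p, ∑ q, a p q * x p * x q := by
      rw [Finset.sum_comm]
      simp only [mul_right_comm]
    calc inner ℝ (Matrix.toLpLin 2 2 A x) x
        = (∑ p, ∑ q, a p q * x p * x q + ∑ p, ∑ q, a q p * x p * x q) / 2 := by
          simp only [PiLp.inner_apply, Matrix.toLpLin_apply, Matrix.mulVec, dotProduct, hA,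
            Matrix.of_apply, Real.inner_apply, Finset.sum_mul, ← Finset.sum_add_distrib,
            Finset.sum_div]
          refine Finset.sum_congr rfl fun p _ => Finset.sum_congr rfl fun q _ => ?_
          ring
      _ = ∑ p, ∑ q, a p q * x p * x q := by rw [double_sum_symm, add_self_div_two]
  have trace_eq : LinearMap.trace ℝ _ (Matrix.toLpLin 2 2 A) = ∑ p, a p p := by
    rw [Matrix.toLpLin_eq_toLin, Matrix.trace_toLin_eq]
    simp [hA, Matrix.trace]
  have trace_sq_eq : LinearMap.trace ℝ _ (Matrix.toLpLin 2 2 A * Matrix.toLpLin 2 2 A)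
      = (∑ p, ∑ q, (a p q + a q p) ^ 2) / 4 := by
    rw [Matrix.toLpLin_eq_toLin, Module.End.mul_eq_comp, ← Matrix.toLin_mul,
      Matrix.trace_toLin_eq]
    simp only [Matrix.trace, Matrix.diag_apply, Matrix.mul_apply, hA, Matrix.of_apply,
      Finset.sum_div]
    refine Finset.sum_congr rfl fun p _ => Finset.sum_congr rfl fun q _ => ?_
    ring
  simp only [← inner_map_self, integral_sphere_inner_map_self_sq hsymm, trace_eq, trace_sq_eq,
    finrank_euclideanSpace]
  ring

end SphereMoments

section Calculus

variable {E : Type*} [NormedAddCommGroup E]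

lemma fderiv_apply_self_of_homogeneous [NormedSpace ℝ E] {k : ℕ} {h : E → ℝ}
    {y : E} (hh : ∀ t > 0, h (t • y) = t ^ k * h y) (hd : DifferentiableAt ℝ h y) :
    fderiv ℝ h y y = k * h y := by
  have along_ray : HasDerivAt (fun t : ℝ => h (t • y)) (fderiv ℝ h y y) 1 := by
    have hray : HasDerivAt (fun t : ℝ => t • y) y 1 := by
      simpa using (hasDerivAt_id (1 : ℝ)).smul_const y
    exact HasFDerivAt.comp_hasDerivAt 1 (by simpa using hd.hasFDerivAt) hray
  have of_power : HasDerivAt (fun t : ℝ => h (t • y)) (k * h y) 1 := by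
    have hpow : HasDerivAt (fun t : ℝ => t ^ k * h y) (k * h y) 1 := by
      simpa using (hasDerivAt_pow k (1 : ℝ)).mul_const (h y)
    exact hpow.congr_of_eventuallyEq <| (lt_mem_nhds one_pos).mono hh
  exact along_ray.unique of_power

variable [InnerProductSpace ℝ E]

lemma hasFDerivAt_comp_norm_sq {φ : ℝ → ℝ} {φ' : ℝ} {y : E} (hφ : HasDerivAt φ φ' (‖y‖ ^ 2)) :
    HasFDerivAt (fun z => φ (‖z‖ ^ 2)) ((2 * φ') • innerSL ℝ y) y := by
  have hcomp := hφ.comp_hasFDerivAt y (hasStrictFDerivAt_norm_sq y).hasFDerivAt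
  refine hcomp.congr_fderiv ?_
  rw [← Nat.cast_smul_eq_nsmul ℝ, smul_smul, mul_comm, Nat.cast_ofNat]

lemma fderiv_radial_mul_homogeneous_apply_self {k : ℕ} {h : E → ℝ}
    {y : E} (hh : ∀ t > 0, h (t • y) = t ^ k * h y) {f : ℝ → ℝ}
    (hf : DifferentiableAt ℝ f (‖y‖ ^ 2)) (hd : DifferentiableAt ℝ h y) :
    fderiv ℝ (fun z => f (‖z‖ ^ 2) * h z) y y
      = (2 * (‖y‖ ^ 2 * deriv f (‖y‖ ^ 2)) + k * f (‖y‖ ^ 2)) * h y := by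
  rw [((hasFDerivAt_comp_norm_sq hf.hasDerivAt).fun_mul hd.hasFDerivAt).fderiv]
  simp only [add_apply, smul_apply, innerSL_apply_apply,
    real_inner_self_eq_norm_sq, fderiv_apply_self_of_homogeneous hh hd, smul_eq_mul]
  ring

end Calculus

section PartialDerivatives

variable {N : ℕ}

lemma sum_pd_mul_coord (F : EuclideanSpace ℝ (Fin N) → ℝ) (y : EuclideanSpace ℝ (Fin N)) :
    ∑ i, pd N i F y * y i = fderiv ℝ F y y := by
  calc ∑ i, pd N i F y * y i
      = fderiv ℝ F y (∑ i, y i • EuclideanSpace.single i 1) := by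
        simp only [pd, map_sum, map_smul, smul_eq_mul, mul_comm]
    _ = fderiv ℝ F y y := by
        congr 1
        simpa using (EuclideanSpace.basisFun (Fin N) ℝ).sum_repr y

/-- The standard bubble of scale `lam` centred at the origin, with a free exponent `a`; the bubble
of the fourth-order problem on `ℝ^N` has `a = (N - 4) / 2`. -/
def bubble {E : Type*} [Norm E] (lam a : ℝ) (y : E) : ℝ :=
  (lam / (lam ^ 2 + ‖y‖ ^ 2)) ^ a

lemma pd_bubble {lam : ℝ} (hlam : 0 < lam) (a : ℝ) (i : Fin N) (y : EuclideanSpace ℝ (Fin N)) :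
    pd N i (bubble lam a) y = -(2 * a / (lam ^ 2 + ‖y‖ ^ 2) * bubble lam a y) * y i := by
  have hD : 0 < lam ^ 2 + ‖y‖ ^ 2 := by positivity
  have profile_deriv : HasDerivAt (fun t : ℝ => (lam / (lam ^ 2 + t)) ^ a)
      (-(a / (lam ^ 2 + ‖y‖ ^ 2)) * bubble lam a y) (‖y‖ ^ 2) := by
    have hquot := (((hasDerivAt_id' (‖y‖ ^ 2)).const_add (lam ^ 2)).fun_inv hD.ne').const_mul lam
    refine (hquot.rpow_const (p := a) (.inl (by positivity))).congr_deriv ?_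
    rw [← div_eq_mul_inv, Real.rpow_sub_one (by positivity), bubble]
    field_simp
  have gradient : HasFDerivAt (bubble lam a) _ y := hasFDerivAt_comp_norm_sq profile_deriv
  rw [pd, gradient.fderiv]
  simp only [smul_apply, innerSL_apply_apply, EuclideanSpace.inner_single_right, conj_trivial,
    smul_eq_mul]
  ring

lemma bubble_sq {E : Type*} [SeminormedAddGroup E] (hN : 4 ≤ N) {lam : ℝ} (hlam : 0 < lam)
    (y : E) :
    bubble lam (((N : ℝ) - 4) / 2) y ^ 2 = (lam / (lam ^ 2 + ‖y‖ ^ 2)) ^ (N - 4) := by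
  rw [bubble, ← Real.rpow_mul_natCast (by positivity), ← Real.rpow_natCast _ (N - 4),
    Nat.cast_sub hN, Nat.cast_ofNat, Nat.cast_ofNat, div_mul_cancel₀ _ two_ne_zero]

end PartialDerivatives

section ContractedWeylTensor

variable {N : ℕ} (W : Fin N → Fin N → Fin N → Fin N → ℝ)

lemma Hmat_smul (m s : Fin N) (t : ℝ) (y : EuclideanSpace ℝ (Fin N)) :
    Hmat N W m s (t • y) = t ^ 2 * Hmat N W m s y := by
  simp only [Hmat, Finset.mul_sum, PiLp.smul_apply, smul_eq_mul]
  refine Finset.sum_congr rfl fun p _ => Finset.sum_congr rfl fun q _ => ?_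
  ring

lemma differentiable_Hmat (m s : Fin N) : Differentiable ℝ (Hmat N W m s) := by
  unfold Hmat
  fun_prop

lemma fderiv_Hbar_apply_self {f : ℝ → ℝ} (hf : Differentiable ℝ f) (m s : Fin N)
    (y : EuclideanSpace ℝ (Fin N)) :
    fderiv ℝ (Hbar N W f m s) y y
      = 2 * (‖y‖ ^ 2 * deriv f (‖y‖ ^ 2) + f (‖y‖ ^ 2)) * Hmat N W m s y := by
  unfold Hbar
  rw [fderiv_radial_mul_homogeneous_apply_self (fun t _ => Hmat_smul W m s t y) (hf _)
    (differentiable_Hmat W m s y), Nat.cast_ofNat, mul_add]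

lemma integral_sphere_sum_Hmat_sq [NeZero N] (hTrace : ∀ m s, ∑ p, W m p s p = 0) :
    ∫ x, ∑ m, ∑ s, Hmat N W m s x.1 ^ 2 ∂sphereMeasure N
      = sphereArea N / (N * (N + 2)) / 2
        * ∑ m, ∑ s, ∑ p, ∑ q, (W m p s q + W m q s p) ^ 2 := by
  have single (m s : Fin N) : ∫ x, Hmat N W m s x.1 ^ 2 ∂sphereMeasure N
      = sphereArea N / (N * (N + 2)) / 2 * ∑ p, ∑ q, (W m p s q + W m q s p) ^ 2 := by
    have h := integral_sphere_quadraticForm_sq fun p q => W m p s q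
    rw [hTrace, Fintype.card_fin] at h
    refine h.trans ?_
    rw [sphereArea, sphereMeasure, Measure.real]
    ring
  have hint (m s : Fin N) : Integrable (fun x => Hmat N W m s x.1 ^ 2) (sphereMeasure N) := by
    have := (differentiable_Hmat W m s).continuous
    exact integrable_sphere_of_continuous _ (by fun_prop)
  rw [integral_finsetSum _ fun m _ => integrable_finsetSum _ fun s _ => hint m s]
  simp only [integral_finsetSum _ fun s _ => hint _ s, single, Finset.mul_sum]

end ContractedWeylTensor

lemma sum_mul_mul_mul_eq_sum_sq_sum {ι κ R : Type*} [Fintype ι] [Fintype κ] [CommSemiring R]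
    (A : κ → κ → ι → R) (b : ι → R) :
    ∑ i, ∑ j, ∑ m, ∑ s, A m s i * A m s j * b i * b j = ∑ m, ∑ s, (∑ i, A m s i * b i) ^ 2 := by
  have comm (F : ι → ι → κ → κ → R) :
      ∑ i, ∑ j, ∑ m, ∑ s, F i j m s = ∑ m, ∑ s, ∑ i, ∑ j, F i j m s := by
    have h := Finset.sum_comm (s := Finset.univ) (t := Finset.univ)
      (f := fun (ij : ι × ι) (ms : κ × κ) => F ij.1 ij.2 ms.1 ms.2)
    simpa only [Fintype.sum_prod_type] using h
  simp only [comm, sq, Finset.sum_mul_sum, mul_assoc, mul_left_comm (b _)]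

lemma sum_pd_Hbar_mul_pd_bubble {N : ℕ} (hN : 4 ≤ N) (W : Fin N → Fin N → Fin N → Fin N → ℝ)
    {f : ℝ → ℝ} (hf : Differentiable ℝ f) {lam : ℝ} (hlam : 0 < lam)
    (y : EuclideanSpace ℝ (Fin N)) :
    ∑ i, ∑ j, ∑ m, ∑ s, pd N i (Hbar N W f m s) y * pd N j (Hbar N W f m s) y
        * pd N i (bubble lam (((N : ℝ) - 4) / 2)) y * pd N j (bubble lam (((N : ℝ) - 4) / 2)) y
      = (∑ m, ∑ s, Hmat N W m s y ^ 2)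
        * (4 * (‖y‖ ^ 2 * deriv f (‖y‖ ^ 2) + f (‖y‖ ^ 2)) ^ 2
          * (((N : ℝ) - 4) ^ 2 * lam ^ (N - 4) / (lam ^ 2 + ‖y‖ ^ 2) ^ (N - 2))) := by
  set u : EuclideanSpace ℝ (Fin N) → ℝ := bubble lam (((N : ℝ) - 4) / 2)
  set C := ((N : ℝ) - 4) / (lam ^ 2 + ‖y‖ ^ 2) * u y with hC
  have pd_u (i : Fin N) : pd N i u y = -C * y i := by
    rw [pd_bubble hlam, mul_div_cancel₀ _ two_ne_zero]
  have C_sq : C ^ 2 = ((N : ℝ) - 4) ^ 2 * lam ^ (N - 4) / (lam ^ 2 + ‖y‖ ^ 2) ^ (N - 2) := by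
    rw [hC, mul_pow, bubble_sq hN hlam, show N - 2 = N - 4 + 2 by lia, pow_add, div_pow, div_pow]
    field_simp
  have sum_pd_mul_pd_u (m s : Fin N) : ∑ i, pd N i (Hbar N W f m s) y * pd N i u y
      = -C * (2 * (‖y‖ ^ 2 * deriv f (‖y‖ ^ 2) + f (‖y‖ ^ 2)) * Hmat N W m s y) := by
    rw [← fderiv_Hbar_apply_self W hf, ← sum_pd_mul_coord, Finset.mul_sum]
    exact Finset.sum_congr rfl fun i _ => by rw [pd_u, mul_left_comm]
  rw [sum_mul_mul_mul_eq_sum_sq_sum fun m s i => pd N i (Hbar N W f m s) y]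
  simp only [sum_pd_mul_pd_u, ← C_sq, Finset.sum_mul]
  refine Finset.sum_congr rfl fun m _ => Finset.sum_congr rfl fun s _ => ?_
  ring

-- Bochner integrals: where the radial integral diverges, both sides are `0`.
theorem stmt_17_general (N : ℕ) (hN : 4 ≤ N)
    (W : Fin N → Fin N → Fin N → Fin N → ℝ)
    (hTrace : ∀ m s, ∑ p : Fin N, W m p s p = 0)
    (f : ℝ → ℝ) (hf : Differentiable ℝ f)
    (lam' : ℝ) (hlam' : 0 < lam')
    (u : EuclideanSpace ℝ (Fin N) → ℝ)
    (hu : ∀ y, u y = (lam' / (lam' ^ 2 + ‖y‖ ^ 2)) ^ (((N : ℝ) - 4) / 2)) :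
    (∫ y : EuclideanSpace ℝ (Fin N),
        ∑ i : Fin N, ∑ j : Fin N, ∑ m : Fin N, ∑ s : Fin N,
          pd N i (Hbar N W f m s) y * pd N j (Hbar N W f m s) y
            * pd N i u y * pd N j u y)
      = sphereArea N
          * (∑ i : Fin N, ∑ j : Fin N, ∑ k : Fin N, ∑ l : Fin N,
              (W i k j l + W i l j k) ^ 2)
          * lam' ^ (N - 4)
          * (2 * ((N : ℝ) - 4) ^ 2 / (N * ((N : ℝ) + 2)))
          * ∫ r in Set.Ioi (0 : ℝ),
              (r ^ 2 * deriv f (r ^ 2) + f (r ^ 2)) ^ 2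
                * r ^ (N + 3) / (lam' ^ 2 + r ^ 2) ^ (N - 2) := by
  obtain rfl : u = bubble lam' (((N : ℝ) - 4) / 2) := funext hu
  have : NeZero N := ⟨by lia⟩
  have homogeneous : ∀ t > 0, ∀ y, ∑ m, ∑ s, Hmat N W m s (t • y) ^ 2
      = t ^ 4 * ∑ m, ∑ s, Hmat N W m s y ^ 2 := fun t _ y => by
    simp only [Hmat_smul, mul_pow, ← pow_mul, Finset.mul_sum]
  simp only [sum_pd_Hbar_mul_pd_bubble hN W hf hlam']
  rw [integral_homogeneous_mul_fun_norm volume homogeneous fun r =>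
      4 * (r ^ 2 * deriv f (r ^ 2) + f (r ^ 2)) ^ 2
        * (((N : ℝ) - 4) ^ 2 * lam' ^ (N - 4) / (lam' ^ 2 + r ^ 2) ^ (N - 2)),
    ← sphereMeasure, integral_sphere_sum_Hmat_sq W hTrace, finrank_euclideanSpace_fin,
    show N - 1 + 4 = N + 3 by lia]
  simp only [← integral_const_mul]
  congr with r
  ring

theorem stmt_17 (N : ℕ) (hN : 25 ≤ N)
    (W : Fin N → Fin N → Fin N → Fin N → ℝ)
    (hW1 : ∀ i p j q, W i p j q = - W p i j q)
    (hW2 : ∀ i p j q, W i p j q = - W i p q j)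
    (hW3 : ∀ i p j q, W i p j q = W j q i p)
    (hBianchi : ∀ i p j q, W i p j q + W i j q p + W i q p j = 0)
    (hTrace : ∀ p q, ∑ i : Fin N, W i p i q = 0)
    (f : ℝ → ℝ)
    (hf : ∃ P : Polynomial ℝ, P.degree ≤ 4 ∧ ∀ x, f x = P.eval x)
    (lam' : ℝ) (hlam' : 0 < lam')
    (u : EuclideanSpace ℝ (Fin N) → ℝ)
    (hu : ∀ y, u y = (lam' / (lam' ^ 2 + ‖y‖ ^ 2)) ^ (((N : ℝ) - 4) / 2)) :
    (∫ y : EuclideanSpace ℝ (Fin N),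
        ∑ i : Fin N, ∑ j : Fin N, ∑ m : Fin N, ∑ s : Fin N,
          pd N i (Hbar N W f m s) y * pd N j (Hbar N W f m s) y
            * pd N i u y * pd N j u y)
      = sphereArea N
          * (∑ i : Fin N, ∑ j : Fin N, ∑ k : Fin N, ∑ l : Fin N,
              (W i k j l + W i l j k) ^ 2)
          * lam' ^ (N - 4)
          * (2 * ((N : ℝ) - 4) ^ 2 / (N * ((N : ℝ) + 2)))
          * ∫ r in Set.Ioi (0 : ℝ),
              (r ^ 2 * deriv f (r ^ 2) + f (r ^ 2)) ^ 2
                * r ^ (N + 3) / (lam' ^ 2 + r ^ 2) ^ (N - 2) := by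
  obtain ⟨P, -, hP⟩ := hf
  have hTrace' (m s : Fin N) : ∑ p, W m p s p = 0 :=
    (Finset.sum_congr rfl fun p _ => by rw [hW1, hW2, neg_neg]).trans (hTrace m s)
  exact stmt_17_general N (by lia) W hTrace' f (funext hP ▸ P.differentiable) lam' hlam' u hu
end
end
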